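/- Define the Laplace transforms L_W^±(a,λ) = ∫₀^∞ e^{-λt} W(a, ±t) dt for Re(λ) > 0. Then (as functions of λ, extended analytically) they satisfy the ODE ∂²L/∂λ² = 4(a - λ²)L ± 4W'(a,0) + 4λW(a,0), and consequently each L_W^±(a,·) extends to an entire function of λ. -/

import Mathlib

open Filter Asymptotics

/-!
Differentiating twice under the integral sign turns `L''` into the Laplace transform of `t² W(±t)`,
which by Weber's equation is that of `4 a W(±t) - 4 (W(±t))''`; two integrations by parts turn it
into `4 (a - λ²) L` plus the boundary terms. So on the half-plane of convergence `L` solves a linear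
differential equation with entire coefficients. The Picard iterates of such an equation sum to an
entire solution with the initial values of `L` at a point of the half-plane, and Grönwall's
inequality along segments identifies that solution with `L`.
-/

open Set MeasureTheory
open scoped Topology Nat

section LinearODE

variable {E : Type*} [NormedAddCommGroup E] [NormedSpace ℂ E]
  {A : ℂ → E →L[ℂ] E} {b : ℂ → E} {S : Set ℂ} {z₀ : ℂ}

theorem hasDerivAt_comp_lineMap {f : ℂ → E} {f' : E} {z w : ℂ} {t : ℝ}
    (hf : HasDerivAt f f' (AffineMap.lineMap z w t)) :
    HasDerivAt (fun s : ℝ => f (AffineMap.lineMap z w s)) ((w - z) • f') t :=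
  hf.scomp t AffineMap.hasDerivAt_lineMap

theorem lineMap_mem_of_starConvex (hS : StarConvex ℝ z₀ S) {z : ℂ} (hz : z ∈ S) {t : ℝ}
    (ht : t ∈ Icc (0 : ℝ) 1) : AffineMap.lineMap z₀ z t ∈ S :=
  starConvex_iff_segment_subset.1 hS hz (segment_eq_image_lineMap ℝ z₀ z ▸ mem_image_of_mem _ ht)

theorem eqOn_zero_of_hasDerivAt_clm_apply (hS : StarConvex ℝ z₀ S) (hA : ContinuousOn A S)
    {y : ℂ → E} (hy : ∀ z ∈ S, HasDerivAt y (A z (y z)) z) (hy₀ : y z₀ = 0) : EqOn y 0 S := by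
  intro z hz
  let γ : ℝ → ℂ := fun t => AffineMap.lineMap z₀ z t
  have hγ : ∀ t ∈ Icc (0 : ℝ) 1, γ t ∈ S := fun t ht => lineMap_mem_of_starConvex hS hz ht
  obtain ⟨C, hC⟩ := isCompact_Icc.exists_bound_of_continuousOn
    (hA.comp (AffineMap.lineMap_continuous.continuousOn) hγ)
  have hderiv : ∀ t ∈ Icc (0 : ℝ) 1,
      HasDerivAt (fun s => y (γ s)) ((z - z₀) • A (γ t) (y (γ t))) t := fun t ht =>
    hasDerivAt_comp_lineMap (hy _ (hγ t ht))
  have hbound : ∀ t ∈ Ico (0 : ℝ) 1,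
      ‖(z - z₀) • A (γ t) (y (γ t))‖ ≤ ‖z - z₀‖ * C * ‖y (γ t)‖ := fun t ht => by
    rw [norm_smul, mul_assoc]
    gcongr
    exact (A (γ t)).le_of_opNorm_le (hC t (Ico_subset_Icc_self ht)) _
  have h := eq_zero_of_abs_deriv_le_mul_abs_self_of_eq_zero_right
    (fun t ht => (hderiv t ht).continuousAt.continuousWithinAt)
    (fun t ht => (hderiv t (Ico_subset_Icc_self ht)).hasDerivWithinAt)
    (by simpa [γ] using hy₀) hbound 1 (right_mem_Icc.2 zero_le_one)
  simpa [γ] using h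

theorem eqOn_of_hasDerivAt_clm_apply_add (hS : StarConvex ℝ z₀ S) (hA : ContinuousOn A S)
    {y₁ y₂ : ℂ → E} (hy₁ : ∀ z ∈ S, HasDerivAt y₁ (A z (y₁ z) + b z) z)
    (hy₂ : ∀ z ∈ S, HasDerivAt y₂ (A z (y₂ z) + b z) z) (h₀ : y₁ z₀ = y₂ z₀) :
    EqOn y₁ y₂ S := by
  have hsub : ∀ z ∈ S, HasDerivAt (y₁ - y₂) (A z ((y₁ - y₂) z)) z := fun z hz =>
    ((hy₁ z hz).sub (hy₂ z hz)).congr_deriv (by simp)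
  exact fun z hz => sub_eq_zero.1
    (eqOn_zero_of_hasDerivAt_clm_apply hS hA hsub (sub_eq_zero.2 h₀) hz)

theorem norm_le_of_norm_deriv_le_mul_norm_sub_pow (hS : StarConvex ℝ z₀ S) {F f : ℂ → E} {K : ℝ}
    {n : ℕ} (hF : ∀ z ∈ S, HasDerivAt F (f z) z) (hF₀ : F z₀ = 0)
    (hf : ∀ z ∈ S, ‖f z‖ ≤ K * ‖z - z₀‖ ^ n) {z : ℂ} (hz : z ∈ S) :
    ‖F z‖ ≤ K / (n + 1) * ‖z - z₀‖ ^ (n + 1) := by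
  let γ : ℝ → ℂ := fun t => AffineMap.lineMap z₀ z t
  have hγ : ∀ t ∈ Icc (0 : ℝ) 1, γ t ∈ S := fun t ht => lineMap_mem_of_starConvex hS hz ht
  have hderiv : ∀ t ∈ Icc (0 : ℝ) 1, HasDerivAt (fun s => F (γ s)) ((z - z₀) • f (γ t)) t :=
    fun t ht => hasDerivAt_comp_lineMap (hF _ (hγ t ht))
  have hmajorant : ∀ t : ℝ, HasDerivAt (fun s => K / (n + 1) * ‖z - z₀‖ ^ (n + 1) * s ^ (n + 1))
      (K * ‖z - z₀‖ ^ (n + 1) * t ^ n) t := fun t =>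
    ((hasDerivAt_pow (n + 1) t).const_mul _).congr_deriv (by push_cast; field_simp)
  have hbound : ∀ t ∈ Ico (0 : ℝ) 1,
      ‖(z - z₀) • f (γ t)‖ ≤ K * ‖z - z₀‖ ^ (n + 1) * t ^ n := fun t ht => by
    have hdist : ‖γ t - z₀‖ = t * ‖z - z₀‖ := by
      simp [γ, AffineMap.lineMap_apply, abs_of_nonneg ht.1]
    calc ‖(z - z₀) • f (γ t)‖ ≤ ‖z - z₀‖ * (K * ‖γ t - z₀‖ ^ n) := by
          rw [norm_smul]; gcongr; exact hf _ (hγ t (Ico_subset_Icc_self ht))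
      _ = K * ‖z - z₀‖ ^ (n + 1) * t ^ n := by rw [hdist]; ring
  have h := image_norm_le_of_norm_deriv_right_le_deriv_boundary
    (fun t ht => (hderiv t ht).continuousAt.continuousWithinAt)
    (fun t ht => (hderiv t (Ico_subset_Icc_self ht)).hasDerivWithinAt)
    (by simp [γ, hF₀]) hmajorant hbound (right_mem_Icc.2 zero_le_one)
  simpa [γ] using h

theorem norm_picardIterate_le (hS : StarConvex ℝ z₀ S) {Y : ℕ → ℂ → E} {C K : ℝ}
    (hA : ∀ z ∈ S, ‖A z‖ ≤ C) (hY : ∀ n, ∀ z ∈ S, HasDerivAt (Y (n + 1)) (A z (Y n z)) z)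
    (hY₀ : ∀ n, Y (n + 1) z₀ = 0) (hK : ∀ z ∈ S, ‖Y 0 z‖ ≤ K) (n : ℕ) :
    ∀ z ∈ S, ‖Y n z‖ ≤ K * C ^ n / n ! * ‖z - z₀‖ ^ n := by
  induction n with
  | zero => simpa using hK
  | succ n ih =>
    intro z hz
    have hderiv : ∀ w ∈ S, ‖A w (Y n w)‖ ≤ K * C ^ (n + 1) / n ! * ‖w - z₀‖ ^ n := fun w hw =>
      calc ‖A w (Y n w)‖ ≤ C * (K * C ^ n / n ! * ‖w - z₀‖ ^ n) :=
            (A w).le_of_opNorm_le_of_le (hA w hw) (ih w hw)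
        _ = K * C ^ (n + 1) / n ! * ‖w - z₀‖ ^ n := by ring
    refine (norm_le_of_norm_deriv_le_mul_norm_sub_pow hS (hY n) (hY₀ n) hderiv hz).trans_eq ?_
    rw [Nat.factorial_succ, div_div, mul_comm (n ! : ℝ)]
    push_cast
    rfl

theorem exists_summable_norm_picardIterate_le (hA : Continuous A) {Y : ℕ → ℂ → E}
    (hY0 : Continuous (Y 0)) (hY : ∀ n z, HasDerivAt (Y (n + 1)) (A z (Y n z)) z)
    (hY₀ : ∀ n, Y (n + 1) z₀ = 0) {R : ℝ} (hR : 0 < R) :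
    ∃ u : ℕ → ℝ, Summable u ∧ ∀ n, ∀ z ∈ Metric.ball z₀ R, ‖Y n z‖ ≤ u n := by
  have hz₀ : z₀ ∈ Metric.ball z₀ R := Metric.mem_ball_self hR
  have hsub : Metric.ball z₀ R ⊆ Metric.closedBall z₀ R := Metric.ball_subset_closedBall
  obtain ⟨C, hC⟩ := (isCompact_closedBall z₀ R).exists_bound_of_continuousOn hA.continuousOn
  obtain ⟨K, hK⟩ := (isCompact_closedBall z₀ R).exists_bound_of_continuousOn hY0.continuousOn
  have hC0 : 0 ≤ C := (norm_nonneg _).trans (hC z₀ (hsub hz₀))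
  have hK0 : 0 ≤ K := (norm_nonneg _).trans (hK z₀ (hsub hz₀))
  refine ⟨fun n => K * ((C * R) ^ n / n !), (Real.summable_pow_div_factorial (C * R)).mul_left K,
    fun n z hz => ?_⟩
  calc ‖Y n z‖ ≤ K * C ^ n / n ! * ‖z - z₀‖ ^ n :=
        norm_picardIterate_le ((convex_ball z₀ R).starConvex hz₀) (fun w hw => hC w (hsub hw))
          (fun n w _ => hY n w) hY₀ (fun w hw => hK w (hsub hw)) n z hz
    _ ≤ K * C ^ n / n ! * R ^ n := by gcongr; exact (mem_ball_iff_norm.1 hz).le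
    _ = K * ((C * R) ^ n / n !) := by ring

variable (E) in
/-- The operator `(y, y') ↦ (y', c y)`, the coefficient of the first-order system on `E × E` that
encodes the scalar-coefficient equation `y'' = c y`. -/
def companionCLM (c : ℂ) : E × E →L[ℂ] E × E :=
  ContinuousLinearMap.inl ℂ E E ∘L ContinuousLinearMap.snd ℂ E E +
    c • (ContinuousLinearMap.inr ℂ E E ∘L ContinuousLinearMap.fst ℂ E E)

theorem companionCLM_apply (c : ℂ) (x : E × E) : companionCLM E c x = (x.2, c • x.1) := by
  simp [companionCLM]

variable [CompleteSpace E]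

theorem exists_picardIterates (hA : Differentiable ℂ A) (hb : Differentiable ℂ b) (z₀ : ℂ)
    (y₀ : E) :
    ∃ Y : ℕ → ℂ → E, Y 0 z₀ = y₀ ∧ (∀ z, HasDerivAt (Y 0) (b z) z) ∧
      (∀ n, Y (n + 1) z₀ = 0) ∧ ∀ n z, HasDerivAt (Y (n + 1)) (A z (Y n z)) z := by
  have hprim (f : {f : ℂ → E // Differentiable ℂ f}) (x : E) :
      ∃ F : {f : ℂ → E // Differentiable ℂ f}, F.1 z₀ = x ∧ ∀ z, HasDerivAt F.1 (f.1 z) z := by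
    obtain ⟨F, hF₀, hF⟩ := f.2.isExactOn_univ.with_val_at z₀ x
    exact ⟨⟨F, fun z => (hF z trivial).differentiableAt⟩, hF₀, fun z => hF z trivial⟩
  choose P hP₀ hP using hprim
  let Y : ℕ → {f : ℂ → E // Differentiable ℂ f} := fun n =>
    n.rec (P ⟨b, hb⟩ y₀) fun _ y => P ⟨fun z => A z (y.1 z), hA.clm_apply y.2⟩ 0
  exact ⟨fun n => (Y n).1, hP₀ _ _, hP _ _, fun n => hP₀ _ _, fun n => hP _ _⟩

theorem hasDerivAt_tsum_picardIterates (hA : Continuous A) {Y : ℕ → ℂ → E}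
    (hY0 : ∀ z, HasDerivAt (Y 0) (b z) z)
    (hY : ∀ n z, HasDerivAt (Y (n + 1)) (A z (Y n z)) z) (hY₀ : ∀ n, Y (n + 1) z₀ = 0) (z : ℂ) :
    HasDerivAt (fun w => ∑' n, Y n w) (A z (∑' n, Y n z) + b z) z := by
  let B : Set ℂ := Metric.ball z₀ (‖z - z₀‖ + 1)
  have hBmem : B ∈ 𝓝 z := Metric.isOpen_ball.mem_nhds (mem_ball_iff_norm.2 (lt_add_one _))
  have hz : z ∈ B := mem_of_mem_nhds hBmem
  have hY0cont : Continuous (Y 0) := continuous_iff_continuousAt.2 fun w => (hY0 w).continuousAt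
  obtain ⟨u, hu, hYu⟩ := exists_summable_norm_picardIterate_le hA hY0cont hY hY₀
    (by positivity : 0 < ‖z - z₀‖ + 1)
  obtain ⟨C, hC⟩ := (isCompact_closedBall z₀ (‖z - z₀‖ + 1)).exists_bound_of_continuousOn
    hA.continuousOn
  have hsummable : ∀ w ∈ B, Summable fun n => Y n w := fun w hw =>
    .of_norm_bounded hu fun n => hYu n w hw
  have htail : HasDerivAt (fun w => ∑' n, Y (n + 1) w) (∑' n, A z (Y n z)) z :=
    hasDerivAt_tsum_of_isPreconnected (hu.mul_left C) Metric.isOpen_ball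
      (convex_ball z₀ _).isPreconnected (fun n w _ => hY n w)
      (fun n w hw => (A w).le_of_opNorm_le_of_le (hC w (Metric.ball_subset_closedBall hw))
        (hYu n w hw)) (Metric.mem_ball_self (by positivity)) (by simp [hY₀]) hz
  have hsplit : (fun w => ∑' n, Y n w) =ᶠ[𝓝 z] fun w => Y 0 w + ∑' n, Y (n + 1) w :=
    eventually_of_mem hBmem fun w hw => (hsummable w hw).tsum_eq_zero_add
  rw [(A z).map_tsum (hsummable z hz), add_comm]
  exact ((hY0 z).add htail).congr_of_eventuallyEq hsplit

theorem exists_hasDerivAt_clm_apply_add (hA : Differentiable ℂ A) (hb : Differentiable ℂ b)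
    (z₀ : ℂ) (y₀ : E) :
    ∃ y : ℂ → E, y z₀ = y₀ ∧ ∀ z, HasDerivAt y (A z (y z) + b z) z := by
  obtain ⟨Y, hYz₀, hY0, hY₀, hY⟩ := exists_picardIterates hA hb z₀ y₀
  have hz₀ : ∑' n, Y n z₀ = y₀ := by
    rw [tsum_eq_single 0 (Nat.forall_ne_zero_iff _ |>.2 hY₀), hYz₀]
  exact ⟨fun z => ∑' n, Y n z, hz₀, hasDerivAt_tsum_picardIterates hA.continuous hY0 hY hY₀⟩

theorem exists_entire_eqOn_of_hasDerivAt_clm_apply_add (hA : Differentiable ℂ A)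
    (hb : Differentiable ℂ b) (hS : StarConvex ℝ z₀ S) {y : ℂ → E}
    (hy : ∀ z ∈ S, HasDerivAt y (A z (y z) + b z) z) :
    ∃ Y : ℂ → E, EqOn Y y S ∧ ∀ z, HasDerivAt Y (A z (Y z) + b z) z := by
  obtain ⟨Y, hY₀, hY⟩ := exists_hasDerivAt_clm_apply_add hA hb z₀ (y z₀)
  exact ⟨Y, eqOn_of_hasDerivAt_clm_apply_add hS hA.continuous.continuousOn (fun z _ => hY z) hy hY₀,
    hY⟩

theorem exists_entire_eqOn_of_hasDerivAt_hasDerivAt_smul_add {p : ℂ → ℂ} {q : ℂ → E}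
    (hp : Differentiable ℂ p) (hq : Differentiable ℂ q) (hS : StarConvex ℝ z₀ S) {f f' : ℂ → E}
    (hf : ∀ z ∈ S, HasDerivAt f (f' z) z)
    (hf' : ∀ z ∈ S, HasDerivAt f' (p z • f z + q z) z) :
    ∃ F F' : ℂ → E, EqOn F f S ∧ (∀ z, HasDerivAt F (F' z) z) ∧
      ∀ z, HasDerivAt F' (p z • F z + q z) z := by
  have hA : Differentiable ℂ fun z => companionCLM E (p z) := (hp.smul_const _).const_add _
  have hb : Differentiable ℂ fun z => ((0, q z) : E × E) := by fun_prop
  obtain ⟨Y, hYeq, hY⟩ := exists_entire_eqOn_of_hasDerivAt_clm_apply_add hA hb hS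
    (y := fun z => (f z, f' z)) fun z hz =>
      ((hf z hz).prodMk (hf' z hz)).congr_deriv (by simp [companionCLM_apply])
  exact ⟨fun z => (Y z).1, fun z => (Y z).2, fun z hz => congrArg Prod.fst (hYeq hz),
    fun z => (hasFDerivAt_fst.comp_hasDerivAt z (hY z)).congr_deriv (by simp [companionCLM_apply]),
    fun z => (hasFDerivAt_snd.comp_hasDerivAt z (hY z)).congr_deriv (by simp [companionCLM_apply])⟩

end LinearODE

section Laplace

variable {E : Type*} [NormedAddCommGroup E] [NormedSpace ℂ E]
  {u u' : ℝ → E} {l m : ℂ}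

/-- Convergence at `l` of the integral defining the one-sided Laplace transform of `u`,
understood as absolute convergence. -/
def LaplaceConvergent (u : ℝ → E) (l : ℂ) : Prop :=
  IntegrableOn (fun t : ℝ => Complex.exp (-l * t) • u t) (Ioi 0)

/-- The one-sided Laplace transform of `u`; it has the junk value `0` at points where
`LaplaceConvergent` fails. -/
noncomputable def laplaceTransform (u : ℝ → E) (l : ℂ) : E :=
  ∫ t in Ioi (0 : ℝ), Complex.exp (-l * t) • u t

theorem norm_cexp_neg_mul_ofReal (l : ℂ) (t : ℝ) :
    ‖Complex.exp (-l * t)‖ = Real.exp (-l.re * t) := by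
  simp [Complex.norm_exp]

theorem pow_mul_exp_neg_mul_le {δ t : ℝ} (hδ : 0 < δ) (ht : 0 ≤ t) (n : ℕ) :
    t ^ n * Real.exp (-δ * t) ≤ n ! / δ ^ n := by
  have h := Real.pow_div_factorial_le_exp (x := δ * t) (by positivity) n
  rw [neg_mul, Real.exp_neg, ← div_eq_mul_inv, div_le_div_iff₀ (Real.exp_pos _) (by positivity)]
  rw [div_le_iff₀ (by positivity), mul_pow] at h
  linarith

theorem laplaceConvergent_of_norm_le_exp {σ C : ℝ}
    (hmeas : AEStronglyMeasurable u (volume.restrict (Ioi 0)))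
    (hu : ∀ t, 0 < t → ‖u t‖ ≤ C * Real.exp (σ * t)) (hl : σ < l.re) :
    LaplaceConvergent u l := by
  refine Integrable.mono' ((integrableOn_exp_mul_Ioi (sub_neg.2 hl) 0).const_mul C)
    ((Continuous.aestronglyMeasurable (by fun_prop)).smul hmeas) ?_
  filter_upwards [ae_restrict_mem measurableSet_Ioi] with t ht
  calc ‖Complex.exp (-l * t) • u t‖ ≤ Real.exp (-l.re * t) * (C * Real.exp (σ * t)) := by
        rw [norm_smul, norm_cexp_neg_mul_ofReal]; gcongr; exact hu t ht
    _ = C * Real.exp ((σ - l.re) * t) := by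
        rw [mul_left_comm, ← Real.exp_add]; ring_nf

theorem aestronglyMeasurable_of_hasDerivAt (hderiv : ∀ t, 0 ≤ t → HasDerivAt u (u' t) t) :
    AEStronglyMeasurable u (volume.restrict (Ioi 0)) :=
  ContinuousOn.aestronglyMeasurable
    (fun t ht => (hderiv t (le_of_lt ht)).continuousAt.continuousWithinAt) measurableSet_Ioi

namespace LaplaceConvergent

theorem const_smul (h : LaplaceConvergent u l) (c : ℂ) :
    LaplaceConvergent (fun t => c • u t) l :=
  (Integrable.smul c h).congr (Eventually.of_forall fun _ => smul_comm _ _ _)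

theorem sub {v : ℝ → E} (hu : LaplaceConvergent u l) (hv : LaplaceConvergent v l) :
    LaplaceConvergent (fun t => u t - v t) l :=
  (Integrable.sub hu hv).congr (Eventually.of_forall fun _ => (smul_sub _ _ _).symm)

theorem pow_smul (h : LaplaceConvergent u l) (hlm : l.re < m.re) (n : ℕ) :
    LaplaceConvergent (fun t => (t : ℂ) ^ n • u t) m := by
  have hδ : 0 < (m - l).re := by simpa using hlm
  have hbound : ∀ᵐ t : ℝ ∂volume.restrict (Ioi 0),
      ‖(t : ℂ) ^ n * Complex.exp (-(m - l) * t)‖ ≤ n ! / (m - l).re ^ n := by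
    filter_upwards [ae_restrict_mem measurableSet_Ioi] with t ht
    rw [norm_mul, norm_cexp_neg_mul_ofReal, norm_pow, Complex.norm_of_nonneg (le_of_lt ht)]
    exact pow_mul_exp_neg_mul_le hδ (le_of_lt ht) n
  refine (Integrable.bdd_smul h _ (Continuous.aestronglyMeasurable (by fun_prop)) hbound).congr ?_
  filter_upwards with t
  rw [Pi.smul_apply', smul_smul, smul_smul, mul_assoc, ← Complex.exp_add, mul_comm]
  ring_nf

theorem mono (h : LaplaceConvergent u l) (hlm : l.re < m.re) : LaplaceConvergent u m := by
  simpa using h.pow_smul hlm 0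

theorem ofReal_smul (h : LaplaceConvergent u l) (hlm : l.re < m.re) :
    LaplaceConvergent (fun t => (t : ℂ) • u t) m := by
  simpa only [pow_one] using h.pow_smul hlm 1

theorem aestronglyMeasurable (h : LaplaceConvergent u l) :
    AEStronglyMeasurable u (volume.restrict (Ioi 0)) :=
  ((Continuous.aestronglyMeasurable (by fun_prop :
    Continuous fun t : ℝ => Complex.exp (l * t))).smul (Integrable.aestronglyMeasurable h)).congr
      (Eventually.of_forall fun t => by simp [smul_smul, ← Complex.exp_add])

theorem hasDerivAt_laplaceTransform (h : LaplaceConvergent u l) (hlm : l.re < m.re) :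
    HasDerivAt (laplaceTransform u) (-laplaceTransform (fun t => (t : ℂ) • u t) m) m := by
  obtain ⟨ρ, hlρ, hρm⟩ := exists_between hlm
  have hnhds : {z : ℂ | ρ < z.re} ∈ 𝓝 m :=
    (isOpen_lt continuous_const Complex.continuous_re).mem_nhds hρm
  have hmeas (z : ℂ) (v : ℝ → E) (hv : AEStronglyMeasurable v (volume.restrict (Ioi 0))) :
      AEStronglyMeasurable (fun t : ℝ => Complex.exp (-z * t) • v t) (volume.restrict (Ioi 0)) :=
    (Continuous.aestronglyMeasurable (by fun_prop)).smul hv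
  have hdominant : LaplaceConvergent (fun t => (t : ℂ) • u t) (ρ : ℂ) := h.ofReal_smul hlρ
  have hbound : ∀ᵐ t : ℝ ∂volume.restrict (Ioi 0), ∀ z ∈ {z : ℂ | ρ < z.re},
      ‖-(Complex.exp (-z * t) • (t : ℂ) • u t)‖ ≤ ‖Complex.exp (-(ρ : ℂ) * t) • (t : ℂ) • u t‖ := by
    filter_upwards [ae_restrict_mem measurableSet_Ioi] with t ht z hz
    rw [norm_neg, norm_smul, norm_smul (Complex.exp _), norm_cexp_neg_mul_ofReal,
      norm_cexp_neg_mul_ofReal, Complex.ofReal_re]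
    gcongr
    exact le_of_lt ht
  have hderiv (t : ℝ) (z : ℂ) : HasDerivAt (fun z => Complex.exp (-z * t) • u t)
      (-(Complex.exp (-z * t) • (t : ℂ) • u t)) z :=
    (((hasDerivAt_id z).neg.mul_const (t : ℂ)).cexp.smul_const (u t)).congr_deriv
      (by simp only [id, Pi.neg_apply]; module)
  refine (hasDerivAt_integral_of_dominated_loc_of_deriv_le hnhds
    (Eventually.of_forall fun z => hmeas z u h.aestronglyMeasurable) (h.mono hlm)
    (hmeas m _ hdominant.aestronglyMeasurable).neg hbound hdominant.norm
    (Eventually.of_forall fun t z _ => hderiv t z)).2.congr_deriv (integral_neg _)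

theorem norm_le_of_hasDerivAt [CompleteSpace E] (hderiv : ∀ t, 0 ≤ t → HasDerivAt u (u' t) t)
    (h : LaplaceConvergent u' l) (hl : 0 ≤ l.re) {t : ℝ} (ht : 0 ≤ t) :
    ‖u t‖ ≤ (‖u 0‖ + ∫ s in Ioi (0 : ℝ), ‖Complex.exp (-l * s) • u' s‖) * Real.exp (l.re * t) := by
  let g : ℝ → ℝ := fun s => ‖Complex.exp (-l * s) • u' s‖
  have hg : IntegrableOn g (Ioi 0) := Integrable.norm h
  have hgt : IntegrableOn (fun s => Real.exp (l.re * t) * g s) (Ioc 0 t) :=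
    (hg.mono_set Ioc_subset_Ioi_self).const_mul _
  have hle : ∀ᵐ s ∂volume.restrict (Ioc 0 t), ‖u' s‖ ≤ Real.exp (l.re * t) * g s := by
    filter_upwards [ae_restrict_mem measurableSet_Ioc] with s hs
    calc ‖u' s‖ = Real.exp (l.re * s) * g s := by
          simp only [g]
          rw [norm_smul, norm_cexp_neg_mul_ofReal, ← mul_assoc, ← Real.exp_add]
          simp
      _ ≤ Real.exp (l.re * t) * g s := by gcongr; exact hs.2
  have hu' : IntegrableOn u' (Ioc 0 t) :=
    hgt.mono' (h.aestronglyMeasurable.mono_set Ioc_subset_Ioi_self) hle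
  have hftc : ∫ s in Ioc 0 t, u' s = u t - u 0 := by
    rw [← intervalIntegral.integral_of_le ht]
    exact intervalIntegral.integral_eq_sub_of_hasDerivAt
      (fun s hs => hderiv s (uIcc_of_le ht ▸ hs).1)
      ((intervalIntegrable_iff_integrableOn_Ioc_of_le ht).2 hu')
  have hmono : ∫ s in Ioc 0 t, g s ≤ ∫ s in Ioi 0, g s :=
    setIntegral_mono_set hg (Eventually.of_forall fun _ => norm_nonneg _)
      Ioc_subset_Ioi_self.eventuallyLE
  calc ‖u t‖ ≤ ‖u 0‖ + ‖∫ s in Ioc 0 t, u' s‖ := by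
        rw [hftc]; exact norm_le_norm_add_norm_sub' (u t) (u 0)
    _ ≤ ‖u 0‖ + Real.exp (l.re * t) * ∫ s in Ioc 0 t, g s := by
        rw [← integral_const_mul]; gcongr; exact norm_integral_le_of_norm_le hgt hle
    _ ≤ ‖u 0‖ * Real.exp (l.re * t) + Real.exp (l.re * t) * ∫ s in Ioi 0, g s :=
        add_le_add
          (le_mul_of_one_le_right (norm_nonneg _) (Real.one_le_exp (by positivity)))
          (mul_le_mul_of_nonneg_left hmono (Real.exp_nonneg _))
    _ = _ := by ring

theorem of_hasDerivAt [CompleteSpace E] (hderiv : ∀ t, 0 ≤ t → HasDerivAt u (u' t) t)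
    (h : LaplaceConvergent u' l) (hl : 0 ≤ l.re) (hlm : l.re < m.re) :
    LaplaceConvergent u m :=
  laplaceConvergent_of_norm_le_exp (aestronglyMeasurable_of_hasDerivAt hderiv)
    (fun _ ht => norm_le_of_hasDerivAt hderiv h hl ht.le) hlm

end LaplaceConvergent

theorem laplaceTransform_const_smul (c : ℂ) (u : ℝ → E) (l : ℂ) :
    laplaceTransform (fun t => c • u t) l = c • laplaceTransform u l := by
  simp only [laplaceTransform, smul_comm _ c, integral_smul]

theorem laplaceTransform_sub {v : ℝ → E} (hu : LaplaceConvergent u l)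
    (hv : LaplaceConvergent v l) :
    laplaceTransform (fun t => u t - v t) l = laplaceTransform u l - laplaceTransform v l := by
  simp only [laplaceTransform, smul_sub]
  exact integral_sub hu hv

theorem laplaceTransform_of_hasDerivAt [CompleteSpace E]
    (hderiv : ∀ t, 0 ≤ t → HasDerivAt u (u' t) t)
    (hu : LaplaceConvergent u l) (hu' : LaplaceConvergent u' l) :
    laplaceTransform u' l = l • laplaceTransform u l - u 0 := by
  have hprod (t : ℝ) (ht : 0 ≤ t) : HasDerivAt (fun t : ℝ => Complex.exp (-l * t) • u t)
      (Complex.exp (-l * t) • (u' t - l • u t)) t := by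
    have hexp : HasDerivAt (fun t : ℝ => Complex.exp (-l * t)) (Complex.exp (-l * t) * -l) t := by
      simpa using (Complex.ofRealCLM.hasDerivAt.const_mul (-l)).cexp
    exact (hexp.smul (hderiv t ht)).congr_deriv (by module)
  have hint : LaplaceConvergent (fun t => u' t - l • u t) l := hu'.sub (hu.const_smul l)
  have hlim := tendsto_zero_of_hasDerivAt_of_integrableOn_Ioi (fun t ht => hprod t (le_of_lt ht))
    hint hu
  have hftc : laplaceTransform (fun t => u' t - l • u t) l = -u 0 := by
    simpa [laplaceTransform] using integral_Ioi_of_hasDerivAt_of_tendsto' hprod hint hlim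
  rw [laplaceTransform_sub hu' (hu.const_smul l), laplaceTransform_const_smul] at hftc
  rw [sub_eq_iff_eq_add.1 hftc]
  abel

theorem hasDerivAt_laplaceTransform_of_forall_lt {σ : ℝ}
    (hconv : ∀ l : ℂ, σ < l.re → LaplaceConvergent u l) (hl : σ < l.re) :
    HasDerivAt (laplaceTransform u) (-laplaceTransform (fun t => (t : ℂ) • u t) l) l := by
  obtain ⟨ρ, hσρ, hρl⟩ := exists_between hl
  exact (hconv ρ hσρ).hasDerivAt_laplaceTransform hρl

/-- `u` solves Weber's equation `u'' + (t²/4 - a) u = 0` on `[0, ∞)`, with derivative `u'`. -/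
structure IsWeberSolution (a : ℂ) (u u' : ℝ → E) : Prop where
  hasDerivAt : ∀ t : ℝ, 0 ≤ t → HasDerivAt u (u' t) t
  hasDerivAt_deriv : ∀ t : ℝ, 0 ≤ t → HasDerivAt u' ((a - (t : ℂ) ^ 2 / 4) • u t) t

variable [CompleteSpace E] {a : ℂ} {σ : ℝ}

namespace IsWeberSolution

theorem laplaceTransform_ofReal_smul_ofReal_smul (h : IsWeberSolution a u u') (hσ : 0 ≤ σ)
    (hconv : ∀ l : ℂ, σ < l.re → LaplaceConvergent u l) (hl : σ < l.re) :
    laplaceTransform (fun t => (t : ℂ) • (t : ℂ) • u t) l =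
      (4 * (a - l ^ 2)) • laplaceTransform u l + ((4 : ℂ) • u' 0 + (4 * l) • u 0) := by
  let v : ℝ → E := fun t => (t : ℂ) • (t : ℂ) • u t
  have hv (m : ℂ) (hm : σ < m.re) : LaplaceConvergent v m := by
    obtain ⟨ρ, hσρ, hρm⟩ := exists_between hm
    obtain ⟨τ, hρτ, hτm⟩ := exists_between hρm
    exact ((hconv ρ hσρ).ofReal_smul (m := τ) hρτ).ofReal_smul hτm
  have hu'' (t : ℝ) (ht : 0 ≤ t) : HasDerivAt u' (a • u t - (1 / 4 : ℂ) • v t) t :=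
    (h.hasDerivAt_deriv t ht).congr_deriv (by simp only [v]; module)
  have hconv'' (m : ℂ) (hm : σ < m.re) :
      LaplaceConvergent (fun t => a • u t - (1 / 4 : ℂ) • v t) m :=
    ((hconv m hm).const_smul a).sub ((hv m hm).const_smul _)
  have hconv' : LaplaceConvergent u' l := by
    obtain ⟨ρ, hσρ, hρl⟩ := exists_between hl
    exact .of_hasDerivAt hu'' (hconv'' ρ hσρ) (hσ.trans hσρ.le) hρl
  have hparts : a • laplaceTransform u l - (1 / 4 : ℂ) • laplaceTransform v l =
      l • (l • laplaceTransform u l - u 0) - u' 0 := by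
    rw [← laplaceTransform_of_hasDerivAt h.hasDerivAt (hconv l hl) hconv',
      ← laplaceTransform_of_hasDerivAt hu'' hconv' (hconv'' l hl),
      laplaceTransform_sub ((hconv l hl).const_smul a) ((hv l hl).const_smul _),
      laplaceTransform_const_smul, laplaceTransform_const_smul]
  linear_combination (norm := module) (-4 : ℂ) • hparts

theorem hasDerivAt_neg_laplaceTransform_ofReal_smul (h : IsWeberSolution a u u') (hσ : 0 ≤ σ)
    (hconv : ∀ l : ℂ, σ < l.re → LaplaceConvergent u l) (hl : σ < l.re) :
    HasDerivAt (fun l => -laplaceTransform (fun t => (t : ℂ) • u t) l)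
      ((4 * (a - l ^ 2)) • laplaceTransform u l + ((4 : ℂ) • u' 0 + (4 * l) • u 0)) l := by
  obtain ⟨ρ, hσρ, hρl⟩ := exists_between hl
  obtain ⟨τ, hρτ, hτl⟩ := exists_between hρl
  have hconv' : LaplaceConvergent (fun t => (t : ℂ) • u t) (τ : ℂ) := (hconv ρ hσρ).ofReal_smul hρτ
  refine (hconv'.hasDerivAt_laplaceTransform hτl).fun_neg.congr_deriv ?_
  rw [neg_neg, h.laplaceTransform_ofReal_smul_ofReal_smul hσ hconv hl]

end IsWeberSolution

end Laplace

theorem isWeberSolution_ofReal_comp_mul {a s : ℝ} {W : ℝ → ℝ} (hW : ContDiff ℝ 2 W)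
    (hode : ∀ x, deriv (deriv W) x + (x ^ 2 / 4 - a) * W x = 0) (hs : s * s = 1) :
    IsWeberSolution (a : ℂ) (fun t => (W (s * t) : ℂ))
      (fun t => ((s * deriv W (s * t) : ℝ) : ℂ)) where
  hasDerivAt t _ :=
    (((hW.differentiable two_ne_zero (s * t)).hasDerivAt.comp t
      (hasDerivAt_const_mul s)).ofReal_comp).congr_deriv (by rw [mul_comm])
  hasDerivAt_deriv t _ := by
    have hode' : s * (deriv (deriv W) (s * t) * s) = (a - t ^ 2 / 4) * W (s * t) := by
      linear_combination s * s * hode (s * t) +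
        (a - t ^ 2 / 4 * (s * s + 1)) * W (s * t) * hs
    refine ((((hW.differentiable_deriv_two (s * t)).hasDerivAt.comp t
      (hasDerivAt_const_mul s)).const_mul s).ofReal_comp).congr_deriv ?_
    rw [hode']
    push_cast
    rfl

theorem stmt14_general {E : Type*} [NormedAddCommGroup E] [NormedSpace ℂ E] [CompleteSpace E]
    {a : ℂ} {u u' : ℝ → E} (h : IsWeberSolution a u u') {σ : ℝ} (hσ : 0 ≤ σ)
    (hconv : ∀ l : ℂ, σ < l.re → LaplaceConvergent u l) :
    ∃ F : ℂ → E, Differentiable ℂ F ∧ (∀ l : ℂ, σ < l.re → F l = laplaceTransform u l) ∧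
      ∀ l : ℂ, deriv (deriv F) l =
        (4 * (a - l ^ 2)) • F l + ((4 : ℂ) • u' 0 + (4 * l) • u 0) := by
  have hS : StarConvex ℝ ((σ + 1 : ℝ) : ℂ) {l : ℂ | σ < l.re} :=
    (convex_halfSpace_re_gt σ).starConvex (by simp)
  obtain ⟨F, F', hFeq, hF, hF'⟩ := exists_entire_eqOn_of_hasDerivAt_hasDerivAt_smul_add
    (p := fun l => 4 * (a - l ^ 2)) (q := fun l => (4 : ℂ) • u' 0 + (4 * l) • u 0)
    (by fun_prop) (by fun_prop) hS (fun l hl => hasDerivAt_laplaceTransform_of_forall_lt hconv hl)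
    (fun l hl => h.hasDerivAt_neg_laplaceTransform_ofReal_smul hσ hconv hl)
  have hderiv : deriv F = F' := funext fun l => (hF l).deriv
  exact ⟨F, fun l => (hF l).differentiableAt, hFeq, fun l => hderiv ▸ (hF' l).deriv⟩

/-- The Laplace transforms `L_W^±(a,λ) = ∫₀^∞ e^{-λt} W(a,±t) dt` (`Re λ > 0`)
satisfy `L'' = 4(a - λ²)L ± 4W'(a,0) + 4λ W(a,0)` and extend to entire functions. -/
theorem stmt14 (a : ℝ) (W : ℝ → ℝ)
    (hW : ContDiff ℝ (⊤ : ℕ∞) W)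
    (hWode : ∀ x, deriv (deriv W) x + (x ^ 2 / 4 - a) * W x = 0)
    (hWbound : ∃ M : ℝ, ∀ t : ℝ, |W t| ≤ M)
    (sg : ℝ) (hsg : sg = 1 ∨ sg = -1) :
    ∃ F : ℂ → ℂ, Differentiable ℂ F ∧
      (∀ l : ℂ, 0 < l.re →
        F l = ∫ t in Set.Ioi (0 : ℝ), Complex.exp (-l * t) * (W (sg * t) : ℂ)) ∧
      (∀ l : ℂ, deriv (deriv F) l =
        4 * ((a : ℂ) - l ^ 2) * F l + 4 * sg * ((deriv W 0 : ℝ) : ℂ) + 4 * l * ((W 0 : ℝ) : ℂ)) := by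
  obtain ⟨M, hM⟩ := hWbound
  have h := isWeberSolution_ofReal_comp_mul (contDiff_infty.1 hW 2) hWode
    (mul_self_eq_one_iff.2 hsg)
  simpa [laplaceTransform, ← mul_assoc, add_assoc] using stmt14_general h le_rfl fun l =>
    laplaceConvergent_of_norm_le_exp (C := M) (aestronglyMeasurable_of_hasDerivAt h.hasDerivAt)
      fun t _ => by simpa using hM (sg * t)
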